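/- Let n ≥ 1 and ζ_1, …, ζ_{n+1} ∈ ℂ. Then ( z · x^{(n+1)}(ζ_1, …, ζ_{n+1}) )₋ = x^{(n)}(ζ_2, …, ζ_{n+1}). In particular, ( z · x^{(n+1)}(ζ_1, …, ζ_{n+1}) )₋ does not depend on ζ_1. -/

import Mathlib

/-- The singular part `(f)₋` of a Laurent series: the sum of its strictly
negative-degree terms. -/
noncomputable def singPart (f : LaurentSeries ℂ) : LaurentSeries ℂ where
  coeff k := if k < 0 then f.coeff k else 0
  isPWO_support' := by
    apply f.isPWO_support'.mono
    intro k hk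
    simp only [Function.mem_support] at hk ⊢
    by_cases h : k < 0
    · simpa [h] using hk
    · simp [h] at hk

/-- The recursively defined Laurent polynomials `x⁽ᵏ⁾(ζ₁, …, ζ_k)`:
`x⁽¹⁾ = ζ₁ z⁻¹` and
`x⁽ᵏ⁺¹⁾ = ((1+|ζ_{k+1}|²) Σ_{p=0}^k conj(ζ_{k+1})^p (x⁽ᵏ⁾)^{p+1} z^{p(k+1)})₋ + ζ_{k+1} z^{−k−1}`
(`ζ` is indexed starting at `1`; the base case is subsumed via `x⁽⁰⁾ = 0`). -/
noncomputable def xrec (ζ : ℕ → ℂ) : ℕ → LaurentSeries ℂ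
  | 0 => 0
  | m + 1 =>
      singPart (HahnSeries.single (0 : ℤ) (((1 + ‖ζ (m + 1)‖ ^ 2 : ℝ) : ℂ)) *
          ∑ p ∈ Finset.range (m + 1),
            HahnSeries.single (0 : ℤ) ((starRingEnd ℂ (ζ (m + 1))) ^ p) *
              xrec ζ m ^ (p + 1) * HahnSeries.single ((p : ℤ) * ((m : ℤ) + 1)) 1)
        + HahnSeries.single (-(m : ℤ) - 1) (ζ (m + 1))

/-- `f` has no terms in degree below `d`. -/
def Reg (d : ℤ) (f : LaurentSeries ℂ) : Prop := ∀ k < d, f.coeff k = 0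

lemma Reg.mono {d e : ℤ} {f : LaurentSeries ℂ} (h : Reg d f) (hde : e ≤ d) : Reg e f :=
  fun k hk => h k (lt_of_lt_of_le hk hde)

lemma Reg.add {d : ℤ} {f g : LaurentSeries ℂ} (hf : Reg d f) (hg : Reg d g) : Reg d (f + g) := by
  intro k hk
  rw [HahnSeries.coeff_add, hf k hk, hg k hk, add_zero]

lemma reg_zero (d : ℤ) : Reg d 0 := fun _ _ => rfl

lemma Reg.mul {d e : ℤ} {f g : LaurentSeries ℂ} (hf : Reg d f) (hg : Reg e g) :
    Reg (d + e) (f * g) := by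
  intro k hk
  rw [HahnSeries.coeff_mul]
  apply Finset.sum_eq_zero
  rintro ⟨i, j⟩ hij
  have h := (Finset.mem_addAntidiagonal.1 hij).2.2
  simp only at h ⊢
  by_cases hi : i < d
  · rw [hf i hi, zero_mul]
  · rw [hg j (by omega), mul_zero]

lemma reg_single (d : ℤ) (a : ℂ) : Reg d (HahnSeries.single d a) := by
  intro k hk
  exact HahnSeries.coeff_single_of_ne hk.ne

lemma Reg.sum {d : ℤ} {s : Finset ℕ} {f : ℕ → LaurentSeries ℂ} (h : ∀ i ∈ s, Reg d (f i)) :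
    Reg d (∑ i ∈ s, f i) := by
  induction s using Finset.induction_on with
  | empty => simpa using reg_zero d
  | insert a s ha ih =>
    rw [Finset.sum_insert ha]
    exact (h a (by simp)).add (ih fun i hi => h i (by simp [hi]))

lemma Reg.pow_succ {d : ℤ} {f : LaurentSeries ℂ} (hf : Reg d f) (p : ℕ) :
    Reg (d * (p + 1)) (f ^ (p + 1)) := by
  induction p with
  | zero => simpa using hf
  | succ p ih =>
    rw [_root_.pow_succ]
    refine (ih.mul hf).mono (le_of_eq ?_)
    push_cast
    ring

lemma singPart_coeff (f : LaurentSeries ℂ) (k : ℤ) :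
    (singPart f).coeff k = if k < 0 then f.coeff k else 0 := rfl

lemma reg_singPart {d : ℤ} {f : LaurentSeries ℂ} (hf : Reg d f) : Reg d (singPart f) := by
  intro k hk
  rw [singPart_coeff, hf k hk, ite_self]

lemma singPart_congr {f g : LaurentSeries ℂ} (h : Reg 0 (f - g)) : singPart f = singPart g := by
  ext k
  rw [singPart_coeff, singPart_coeff]
  split_ifs with hk
  · have := h k hk
    rw [HahnSeries.coeff_sub] at this
    exact sub_eq_zero.1 this
  · rfl

lemma singPart_add (f g : LaurentSeries ℂ) : singPart (f + g) = singPart f + singPart g := by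
  ext k
  rw [HahnSeries.coeff_add, singPart_coeff, singPart_coeff, singPart_coeff]
  split_ifs <;> simp

lemma reg_sub_singPart (f : LaurentSeries ℂ) : Reg 0 (f - singPart f) := by
  intro k hk
  rw [HahnSeries.coeff_sub, singPart_coeff, if_pos hk, sub_self]

lemma singPart_single {d : ℤ} (hd : d < 0) (a : ℂ) :
    singPart (HahnSeries.single d a) = HahnSeries.single d a := by
  ext k
  rw [singPart_coeff]
  split_ifs with h
  · rfl
  · exact (HahnSeries.coeff_single_of_ne (by omega)).symm

lemma singPart_z_singPart (f : LaurentSeries ℂ) :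
    singPart (HahnSeries.single (1 : ℤ) 1 * singPart f)
      = singPart (HahnSeries.single (1 : ℤ) 1 * f) := by
  apply singPart_congr
  have h : Reg 0 (singPart f - f) := by
    intro k hk
    rw [HahnSeries.coeff_sub, singPart_coeff, if_pos hk, sub_self]
  rw [← mul_sub]
  exact ((reg_single 1 1).mul h).mono (by norm_num)

lemma reg_xrec (ζ : ℕ → ℂ) (m : ℕ) : Reg (-(m : ℤ)) (xrec ζ m) := by
  induction m with
  | zero => exact reg_zero _
  | succ m ih =>
    rw [xrec]
    refine Reg.add (reg_singPart ?_) ((reg_single _ _).mono (by push_cast; omega))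
    refine Reg.mono (d := 0 + -((m + 1 : ℕ) : ℤ)) ((reg_single 0 _).mul (Reg.sum fun p _ => ?_))
      (by simp)
    refine Reg.mono (((reg_single 0 _).mul (ih.pow_succ p)).mul (reg_single _ _)) ?_
    push_cast
    nlinarith

lemma reg_pow_sub {m : ℕ} {y c : LaurentSeries ℂ} (hy : Reg (-(m : ℤ)) y) (hc : Reg 0 c) (p : ℕ) :
    Reg (-(m : ℤ) * p) ((y + c) ^ (p + 1) - y ^ (p + 1)) := by
  induction p with
  | zero => simpa using hc
  | succ p ih =>
    have e : (y + c) ^ (p + 1 + 1) - y ^ (p + 1 + 1)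
        = (y + c) * ((y + c) ^ (p + 1) - y ^ (p + 1)) + c * y ^ (p + 1) := by ring
    rw [e]
    refine Reg.add (((hy.add (hc.mono (by omega))).mul ih).mono (le_of_eq ?_))
      ((hc.mul (hy.pow_succ p)).mono (le_of_eq ?_)) <;> push_cast <;> ring

lemma z_pow (k : ℕ) (a : ℤ) (x : LaurentSeries ℂ) :
    HahnSeries.single (1 : ℤ) (1 : ℂ) * (x ^ (k + 1) * HahnSeries.single ((k : ℤ) * (a + 1)) 1)
      = (HahnSeries.single (1 : ℤ) (1 : ℂ) * x) ^ (k + 1) * HahnSeries.single ((k : ℤ) * a) 1 := by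
  have h : HahnSeries.single ((k : ℤ) * (a + 1)) (1 : ℂ)
      = HahnSeries.single (1 : ℤ) (1 : ℂ) ^ k * HahnSeries.single ((k : ℤ) * a) 1 := by
    rw [HahnSeries.single_pow, HahnSeries.single_mul_single]
    simp [mul_add, add_comm]
  rw [h]
  ring

lemma stmt10_aux (ζ : ℕ → ℂ) (m : ℕ) :
    singPart (HahnSeries.single (1 : ℤ) 1 * xrec ζ (m + 1))
      = xrec (fun j => ζ (j + 1)) m := by
  induction m with
  | zero =>
    ext k
    simp only [xrec, singPart_coeff]
    split_ifs with hk
    · refine ((reg_single 1 1).mul (Reg.add (d := -1) ?_ ((reg_single _ _).mono (by simp)))) k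
        (by omega)
      refine reg_singPart ?_
      simpa using reg_zero (-1)
    · rfl
  | succ m ih =>
    have hy := reg_xrec (fun j => ζ (j + 1)) m
    have hc := reg_sub_singPart (HahnSeries.single (1 : ℤ) 1 * xrec ζ (m + 1))
    rw [ih] at hc
    rw [xrec, mul_add, singPart_add, singPart_z_singPart, HahnSeries.single_mul_single,
      singPart_single (by push_cast; omega)]
    conv_rhs => rw [xrec]
    congr 1
    swap
    · rw [one_mul]
      congr 2
      push_cast
      ring
    apply singPart_congr
    generalize hx : xrec ζ (m + 1) = x at *
    generalize xrec (fun j => ζ (j + 1)) m = y at *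
    obtain ⟨c, hcd⟩ : ∃ c, c = HahnSeries.single (1 : ℤ) 1 * x - y := ⟨_, rfl⟩
    rw [← hcd] at hc
    have hzx : HahnSeries.single (1 : ℤ) 1 * x = y + c := by rw [hcd]; ring
    rw [mul_left_comm, ← mul_sub]
    refine Reg.mono (d := 0 + 0) ((reg_single 0 _).mul ?_) (by simp)
    have key : ∀ p : ℕ, HahnSeries.single (1 : ℤ) (1 : ℂ) *
        (HahnSeries.single (0 : ℤ) ((starRingEnd ℂ (ζ (m + 1 + 1))) ^ p) * x ^ (p + 1) *
          HahnSeries.single ((p : ℤ) * (((m + 1 : ℕ) : ℤ) + 1)) 1)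
        = HahnSeries.single (0 : ℤ) ((starRingEnd ℂ (ζ (m + 1 + 1))) ^ p) *
          ((y + c) ^ (p + 1) * HahnSeries.single ((p : ℤ) * ((m : ℤ) + 1)) 1) := by
      intro p
      rw [← hzx, mul_assoc, mul_left_comm, z_pow]
      push_cast
      rfl
    rw [Finset.mul_sum, Finset.sum_congr rfl fun p _ => key p, Finset.sum_range_succ,
      add_sub_right_comm, ← Finset.sum_sub_distrib]
    refine Reg.add (Reg.sum fun p _ => ?_) ?_
    · rw [mul_assoc, ← mul_sub, ← sub_mul]
      refine Reg.mono ((reg_single 0 _).mul ((reg_pow_sub hy hc p).mul (reg_single _ _))) ?_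
      nlinarith
    · refine Reg.mono ((reg_single 0 _).mul
        (((hy.add (hc.mono (by omega))).pow_succ (m + 1)).mul (reg_single _ _))) ?_
      push_cast
      nlinarith

/-- `(z · x⁽ⁿ⁺¹⁾(ζ₁, …, ζ_{n+1}))₋ = x⁽ⁿ⁾(ζ₂, …, ζ_{n+1})`; in particular the left-hand side
does not depend on `ζ₁`. -/
theorem stmt10 (n : ℕ) (hn : 1 ≤ n) (ζ : ℕ → ℂ) :
    singPart (HahnSeries.single (1 : ℤ) 1 * xrec ζ (n + 1))
      = xrec (fun j => ζ (j + 1)) n := by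
  exact stmt10_aux ζ n
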